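/- Let G be an n-vertex unicyclic graph with unique cycle C_l and branches T_1,…,T_l. Then the multiplicative degree-Kirchhoff index satisfies Kf*(G) = 4·Kf(G) + 4·Σ_{i=1}^{l} D_{T_i}(v_i) − (2n+1)(n−l). -/

import Mathlib

open SimpleGraph Finset

attribute [local instance] Classical.propDecidable

variable {V : Type*}

/-- Degree of a vertex as a real number. -/
noncomputable def degR [Fintype V] (G : SimpleGraph V) (x : V) : ℝ :=
  ((Finset.univ.filter fun y => G.Adj x y).card : ℝ)

/-- Number of edges of a graph. -/
noncomputable def esize (G : SimpleGraph V) : ℕ := Nat.card G.edgeSet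

/-- Dirichlet energy of a potential. -/
noncomputable def energyFn [Fintype V] (G : SimpleGraph V) (φ : V → ℝ) : ℝ :=
  (1/2) * ∑ u, ∑ v, if G.Adj u v then (φ u - φ v)^2 else 0

/-- Effective resistance between two vertices (unit resistors on edges),
via the Dirichlet variational principle: the reciprocal of the minimal energy
of a potential with value 1 at `x` and 0 at `y`. -/
noncomputable def eres [Fintype V] (G : SimpleGraph V) (x y : V) : ℝ :=
  (sInf {e : ℝ | ∃ φ : V → ℝ, φ x = 1 ∧ φ y = 0 ∧ e = energyFn G φ})⁻¹

/-- The transition matrix of the simple random walk, killed at `y`. -/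
noncomputable def hitMat [Fintype V] (G : SimpleGraph V) (y : V) : Matrix V V ℝ :=
  Matrix.of fun u v => if v = y then 0 else if G.Adj u v then (degR G u)⁻¹ else 0

/-- Expected hitting time `H_{xy}` of the simple random walk from `x` to `y`,
expressed as the sum of the survival probabilities of the walk killed at `y`. -/
noncomputable def hitting [Fintype V] (G : SimpleGraph V) (x y : V) : ℝ :=
  if x = y then 0 else ∑' k : ℕ, ∑ z, (hitMat G y ^ k) x z

/-- Resistance-centrality `R(x)`. -/
noncomputable def Rres [Fintype V] (G : SimpleGraph V) (x : V) : ℝ := ∑ y, eres G x y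

/-- Weighted resistance-centrality `R^w(x)`. -/
noncomputable def Rw [Fintype V] (G : SimpleGraph V) (x : V) : ℝ :=
  ∑ y, degR G y * eres G x y

/-- Kirchhoff index `Kf(G)`. -/
noncomputable def Kf [Fintype V] (G : SimpleGraph V) : ℝ :=
  (1/2) * ∑ x, ∑ y, eres G x y

/-- Additive degree-Kirchhoff index `Kf⁺(G)`. -/
noncomputable def KfPlus [Fintype V] (G : SimpleGraph V) : ℝ :=
  (1/2) * ∑ x, ∑ y, (degR G x + degR G y) * eres G x y

/-- Multiplicative degree-Kirchhoff index `Kf*(G)`. -/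
noncomputable def KfStar [Fintype V] (G : SimpleGraph V) : ℝ :=
  (1/2) * ∑ x, ∑ y, degR G x * degR G y * eres G x y

/-- Cover cost `CC(x) = Σ_y H_{xy}`. -/
noncomputable def coverCost [Fintype V] (G : SimpleGraph V) (x : V) : ℝ :=
  ∑ y, hitting G x y

/-- Reverse cover cost `RC(x) = Σ_y H_{yx}`. -/
noncomputable def reverseCoverCost [Fintype V] (G : SimpleGraph V) (x : V) : ℝ :=
  ∑ y, hitting G y x

/-- Centrality (transmission) `D(x) = Σ_y d(x,y)`. -/
noncomputable def Dcent [Fintype V] (G : SimpleGraph V) (x : V) : ℝ :=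
  ∑ y, (G.dist x y : ℝ)

/-- Weighted centrality `D^w(x) = Σ_y deg(y)·d(x,y)`. -/
noncomputable def Dw [Fintype V] (G : SimpleGraph V) (x : V) : ℝ :=
  ∑ y, degR G y * (G.dist x y : ℝ)

/-- Wiener index `W(G)`. -/
noncomputable def Wiener [Fintype V] (G : SimpleGraph V) : ℝ :=
  (1/2) * ∑ x, ∑ y, (G.dist x y : ℝ)

/-- `D_{T}(v)`: sum of distances from `v` to the vertices of its connected
component in `G'` (used for the branch trees of a unicyclic graph). -/
noncomputable def branchD [Fintype V] (G' : SimpleGraph V) (v : V) : ℝ :=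
  ∑ u, if G'.Reachable v u then (G'.dist v u : ℝ) else 0

/-- The set of edges of the cycle `c 0 - c 1 - ⋯ - c (l-1) - c 0`. -/
def cycleEdges {l : ℕ} [NeZero l] (c : Fin l → V) : Set (Sym2 V) :=
  Set.range fun i : Fin l => s(c i, c (i + 1))

/-- Distance from a vertex to a set of vertices. -/
noncomputable def distToSet [Fintype V] (G : SimpleGraph V) (x : V) (s : Set V) : ℕ :=
  sInf {d | ∃ y ∈ s, G.dist x y = d}

/-- `v` is the center of a star. -/
def IsStarCenter (G : SimpleGraph V) (v : V) : Prop := ∀ u, u ≠ v → G.Adj v u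

/-- `G` is a star. -/
def IsStar (G : SimpleGraph V) : Prop := ∃ v, IsStarCenter G v

/-- The lollipop graph `P_n^l` : a cycle `C_l` on `0,…,l-1` together with a
path on `l,…,n-1` attached at the cycle vertex `0`. -/
def lollipop (n l : ℕ) : SimpleGraph (Fin n) :=
  SimpleGraph.fromRel (fun a b =>
    (a.val + 1 = b.val ∧ b.val < l) ∨ (a.val = 0 ∧ b.val = l - 1) ∨
    (a.val = 0 ∧ b.val = l) ∨ (l ≤ a.val ∧ a.val + 1 = b.val))

/-- The graph `S_n^l` : a cycle `C_l` on `0,…,l-1` with `n - l` pendant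
vertices `l,…,n-1` attached at the cycle vertex `0`. -/
def starCycle (n l : ℕ) : SimpleGraph (Fin n) :=
  SimpleGraph.fromRel (fun a b =>
    (a.val + 1 = b.val ∧ b.val < l) ∨ (a.val = 0 ∧ b.val = l - 1) ∨
    (a.val = 0 ∧ l ≤ b.val))

/-- The cycle graph `C_n` on `Fin n`. -/
def cycleG (n : ℕ) : SimpleGraph (Fin n) :=
  SimpleGraph.fromRel (fun a b => a.val + 1 = b.val ∨ (a.val = 0 ∧ b.val = n - 1))

/-!
Write `p u` for the neighbour of an off-cycle vertex `u` one step closer to the cycle `C`. The edge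
from `u` to `p u` is a bridge, so `r(p u, y) - r(u, y)` is `1` or `-1` according to whether or not
`y` lies below `u`; the number of `u` above `y` is the distance `d(y, C)`. As `G` has as many edges
as vertices, its edges are the cycle edges and one edge from `u` to `p u` for each off-cycle `u`, so
`∑ x, deg x * f x = 2 * ∑ x, f x + ∑ u off C, (f (p u) - f u)` for every `f`. With `f = r(x, ·)`
this gives `∑ y, deg y * r(x, y) = 2 * ∑ y, r(x, y) + 2 * d(x, C) - (n - l)`, and applying it again,
to the left side as a function of `x`, gives the formula with `∑ x, d(x, C)` in place of the branch
sums, which it equals.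
-/

section QuadraticInequalities

lemma add_sq_le_add_one_mul {R E a b : ℝ} (hR : 0 ≤ R) (hE : 0 ≤ E) (h : a ^ 2 ≤ R * E) :
    (a + b) ^ 2 ≤ (R + 1) * (E + b ^ 2) := by
  have hcross : 2 * (a * b) ≤ E + R * b ^ 2 := by
    refine abs_le_of_sq_le_sq' ?_ (by positivity) |>.2
    calc (2 * (a * b)) ^ 2 = 4 * b ^ 2 * a ^ 2 := by ring
      _ ≤ 4 * b ^ 2 * (R * E) := by gcongr
      _ ≤ (E + R * b ^ 2) ^ 2 := by linarith [sq_nonneg (E - R * b ^ 2)]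
  linarith

lemma sq_le_sub_one_mul_of_forall {R E a : ℝ} (hR : 0 < R)
    (h : ∀ t, (a + t) ^ 2 ≤ R * (E + t ^ 2)) : a ^ 2 ≤ (R - 1) * E := by
  have hdiscrim : discrim (R - 1) (-2 * a) (R * E - a ^ 2) ≤ 0 :=
    discrim_le_zero fun t ↦ by linarith [h t]
  rw [discrim] at hdiscrim
  exact le_of_mul_le_mul_left (by linarith) hR

end QuadraticInequalities

section Energy

variable [Fintype V] {G : SimpleGraph V}

lemma energyFn_nonneg (G : SimpleGraph V) (φ : V → ℝ) : 0 ≤ energyFn G φ :=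
  mul_nonneg (by norm_num) <| sum_nonneg fun _ _ ↦ sum_nonneg fun _ _ ↦ by
    split_ifs <;> positivity

lemma energyFn_mul_sub (G : SimpleGraph V) (φ : V → ℝ) (t s : ℝ) :
    energyFn G (fun z ↦ t * (φ z - s)) = t ^ 2 * energyFn G φ := by
  have hterm (a b : V) : (if G.Adj a b then (t * (φ a - s) - t * (φ b - s)) ^ 2 else 0) =
      t ^ 2 * if G.Adj a b then (φ a - φ b) ^ 2 else 0 := by
    split_ifs <;> ring
  simp only [energyFn, hterm, ← mul_sum]
  ring

lemma energyFn_eq_deleteEdges_add {u v : V} (huv : G.Adj u v) (φ : V → ℝ) :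
    energyFn G φ = energyFn (G.deleteEdges {s(u, v)}) φ + (φ u - φ v) ^ 2 := by
  -- Both sides then use the same decidability instance for `H.Adj`.
  generalize hH : G.deleteEdges {s(u, v)} = H
  have hterm (a b : V) : (if G.Adj a b then (φ a - φ b) ^ 2 else 0) =
      (if H.Adj a b then (φ a - φ b) ^ 2 else 0) +
        ((if a = u then if b = v then (φ u - φ v) ^ 2 else 0 else 0) +
          if a = v then if b = u then (φ u - φ v) ^ 2 else 0 else 0) := by
    have := huv.ne
    have := huv.symm
    simp only [← hH, deleteEdges_adj, Set.mem_singleton_iff, Sym2.eq_iff]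
    grind
  simp only [energyFn, hterm, sum_add_distrib, sum_ite_eq', mem_univ, if_true, sum_ite_irrel,
    sum_const_zero]
  ring

lemma sq_sub_le_energyFn {u v : V} (huv : G.Adj u v) (φ : V → ℝ) :
    (φ u - φ v) ^ 2 ≤ energyFn G φ := by
  rw [energyFn_eq_deleteEdges_add huv]
  exact le_add_of_nonneg_left (energyFn_nonneg _ φ)

lemma abs_sub_le_length_mul_sqrt_energyFn {x y : V} (w : G.Walk x y) (φ : V → ℝ) :
    |φ x - φ y| ≤ w.length * √(energyFn G φ) := by
  induction w with
  | nil => simp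
  | @cons x z y h w ih =>
    calc |φ x - φ y| ≤ |φ x - φ z| + |φ z - φ y| := abs_sub_le ..
      _ ≤ √(energyFn G φ) + w.length * √(energyFn G φ) :=
        add_le_add (Real.abs_le_sqrt (sq_sub_le_energyFn h φ)) ih
      _ = (w.cons h).length * √(energyFn G φ) := by
        rw [Walk.length_cons]
        push_cast
        ring

lemma energyFn_piecewise_const_le {D : Set V} (hD : ∀ a b, G.Adj a b → (a ∈ D ↔ b ∈ D))
    (φ : V → ℝ) (s : ℝ) : energyFn G (D.piecewise (fun _ ↦ s) φ) ≤ energyFn G φ := by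
  refine mul_le_mul_of_nonneg_left (sum_le_sum fun a _ ↦ sum_le_sum fun b _ ↦ ?_) (by norm_num)
  split_ifs with hab
  · by_cases ha : a ∈ D
    · simpa [ha, (hD a b hab).1 ha] using sq_nonneg (φ a - φ b)
    · simp [ha, mt (hD a b hab).2 ha]
  · rfl

end Energy

section EffectiveResistance

variable [Fintype V] {G : SimpleGraph V}

/-- The effective conductance between `x` and `y`, so that `eres` is its inverse. It is `0` for
`x = y`, where no potential is admissible and the infimum is that of the empty set. -/
noncomputable def conductance (G : SimpleGraph V) (x y : V) : ℝ :=
  sInf {e : ℝ | ∃ φ : V → ℝ, φ x = 1 ∧ φ y = 0 ∧ e = energyFn G φ}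

lemma eres_eq_inv_conductance (G : SimpleGraph V) (x y : V) :
    eres G x y = (conductance G x y)⁻¹ := rfl

lemma conductance_self (G : SimpleGraph V) (x : V) : conductance G x x = 0 := by
  have hempty : {e : ℝ | ∃ φ : V → ℝ, φ x = 1 ∧ φ x = 0 ∧ e = energyFn G φ} = ∅ :=
    Set.eq_empty_of_forall_notMem fun _ ⟨_, h1, h0, _⟩ ↦ one_ne_zero (h1.symm.trans h0)
  rw [conductance, hempty, Real.sInf_empty]

lemma le_conductance {x y : V} (hxy : x ≠ y) {K : ℝ}
    (hK : ∀ φ : V → ℝ, φ x = 1 → φ y = 0 → K ≤ energyFn G φ) : K ≤ conductance G x y := by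
  refine le_csInf ⟨_, Pi.single x 1, Pi.single_eq_same .., Pi.single_eq_of_ne' hxy _, rfl⟩ ?_
  rintro _ ⟨φ, hx, hy, rfl⟩
  exact hK φ hx hy

lemma sq_sub_mul_conductance_le_energyFn (G : SimpleGraph V) (x y : V) (φ : V → ℝ) :
    (φ x - φ y) ^ 2 * conductance G x y ≤ energyFn G φ := by
  rcases eq_or_ne (φ x - φ y) 0 with h | h
  · simpa [h] using energyFn_nonneg G φ
  · have hle : conductance G x y ≤ energyFn G fun z ↦ (φ x - φ y)⁻¹ * (φ z - φ y) :=
      csInf_le ⟨0, by rintro _ ⟨ψ, -, -, rfl⟩; exact energyFn_nonneg G ψ⟩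
        ⟨_, inv_mul_cancel₀ h, by simp, rfl⟩
    rw [energyFn_mul_sub, inv_pow] at hle
    exact (le_inv_mul_iff₀ (by positivity)).1 hle

lemma conductance_pos {x y : V} (hr : G.Reachable x y) (hxy : x ≠ y) :
    0 < conductance G x y := by
  obtain ⟨w⟩ := hr
  have hw : 0 < w.length := Nat.pos_of_ne_zero fun h ↦ hxy (Walk.eq_of_length_eq_zero h)
  refine lt_of_lt_of_le (b := ((w.length : ℝ) ^ 2)⁻¹) (by positivity)
    (le_conductance hxy fun φ hx hy ↦ ?_)
  have h := abs_sub_le_length_mul_sqrt_energyFn w φ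
  rw [hx, hy, sub_zero, abs_one] at h
  rw [inv_le_iff_one_le_mul₀' (by positivity)]
  calc (1 : ℝ) ≤ (w.length * √(energyFn G φ)) ^ 2 := one_le_pow₀ h
    _ = w.length ^ 2 * energyFn G φ := by rw [mul_pow, Real.sq_sqrt (energyFn_nonneg G φ)]

lemma eres_nonneg (G : SimpleGraph V) (x y : V) : 0 ≤ eres G x y :=
  inv_nonneg.2 <| Real.sInf_nonneg <| by rintro _ ⟨φ, -, -, rfl⟩; exact energyFn_nonneg G φ

lemma sq_sub_le_eres_mul_energyFn {x y : V} (hr : G.Reachable x y) (φ : V → ℝ) :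
    (φ x - φ y) ^ 2 ≤ eres G x y * energyFn G φ := by
  rcases eq_or_ne x y with rfl | hxy
  · simpa using mul_nonneg (eres_nonneg G x x) (energyFn_nonneg G φ)
  · rw [eres_eq_inv_conductance, le_inv_mul_iff₀ (conductance_pos hr hxy), mul_comm]
    exact sq_sub_mul_conductance_le_energyFn G x y φ

lemma eres_le {x y : V} {r : ℝ} (hr : 0 ≤ r)
    (h : ∀ φ : V → ℝ, (φ x - φ y) ^ 2 ≤ r * energyFn G φ) : eres G x y ≤ r := by
  rcases eq_or_ne x y with rfl | hxy
  · rwa [eres_eq_inv_conductance, conductance_self, inv_zero]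
  · have hone (φ : V → ℝ) (hx : φ x = 1) (hy : φ y = 0) : 1 ≤ r * energyFn G φ := by
      simpa [hx, hy] using h φ
    have hr : 0 < r := hr.lt_of_ne' fun hr0 ↦ absurd
      (hone (Pi.single x 1) (Pi.single_eq_same ..) (Pi.single_eq_of_ne' hxy _)) (by simp [hr0])
    refine inv_le_of_inv_le₀ hr (le_conductance hxy fun φ hx hy ↦ ?_)
    exact (inv_le_iff_one_le_mul₀' hr).2 (hone φ hx hy)

lemma eres_comm {x y : V} (hr : G.Reachable x y) : eres G x y = eres G y x := by
  have hle {x y : V} (hr : G.Reachable y x) : eres G x y ≤ eres G y x :=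
    eres_le (eres_nonneg G y x) fun φ ↦
      sub_sq_comm (φ x) (φ y) ▸ sq_sub_le_eres_mul_energyFn hr φ
  exact le_antisymm (hle hr.symm) (hle hr)

end EffectiveResistance

section Bridge

variable {G : SimpleGraph V} {D : Set V} {u v : V}

/-- `D` is the side of `u` of the bridge `uv`: no other edge of `G` leaves `D`. -/
structure IsBridgeSide (G : SimpleGraph V) (D : Set V) (u v : V) : Prop where
  adj : G.Adj u v
  mem : u ∈ D
  notMem : v ∉ D
  mem_iff : ∀ a b, (G.deleteEdges {s(u, v)}).Adj a b → (a ∈ D ↔ b ∈ D)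

namespace IsBridgeSide

lemma compl (h : IsBridgeSide G D u v) : IsBridgeSide G Dᶜ v u where
  adj := h.adj.symm
  mem := h.notMem
  notMem := not_not_intro h.mem
  mem_iff a b hab := not_congr (h.mem_iff a b (by rwa [Sym2.eq_swap]))

variable [Fintype V] {y : V}

lemma energyFn_piecewise_const_le_deleteEdges_add (h : IsBridgeSide G D u v) (φ : V → ℝ) (s : ℝ) :
    energyFn G (D.piecewise (fun _ ↦ s) φ) ≤
      energyFn (G.deleteEdges {s(u, v)}) φ + (s - φ v) ^ 2 := by
  rw [energyFn_eq_deleteEdges_add h.adj, Set.piecewise_eq_of_mem _ _ _ h.mem,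
    Set.piecewise_eq_of_notMem _ _ _ h.notMem]
  gcongr
  exact energyFn_piecewise_const_le h.mem_iff φ s

lemma eres_le_add_one (h : IsBridgeSide G D u v) (hy : y ∉ D) (hr : G.Reachable v y) :
    eres G u y ≤ eres G v y + 1 := by
  refine eres_le (add_nonneg (eres_nonneg G v y) zero_le_one) fun φ ↦ ?_
  have hvy : (φ v - φ y) ^ 2 ≤ eres G v y * energyFn (G.deleteEdges {s(u, v)}) φ := by
    have hflat := sq_sub_le_eres_mul_energyFn hr (D.piecewise (fun _ ↦ φ v) φ)
    rw [Set.piecewise_eq_of_notMem _ _ _ h.notMem, Set.piecewise_eq_of_notMem _ _ _ hy] at hflat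
    refine hflat.trans (mul_le_mul_of_nonneg_left ?_ (eres_nonneg G v y))
    simpa using h.energyFn_piecewise_const_le_deleteEdges_add φ (φ v)
  calc (φ u - φ y) ^ 2 = (φ v - φ y + (φ u - φ v)) ^ 2 := by ring
    _ ≤ (eres G v y + 1) * energyFn G φ := by
      rw [energyFn_eq_deleteEdges_add h.adj]
      exact add_sq_le_add_one_mul (eres_nonneg G v y) (energyFn_nonneg _ φ) hvy

lemma add_one_le_eres (h : IsBridgeSide G D u v) (hy : y ∉ D) (hr : G.Reachable v y) :
    eres G v y + 1 ≤ eres G u y := by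
  -- The test potential is `φ` with `D` raised to the constant `φ v + t`, where `t` is free.
  have hshift (φ : V → ℝ) (t : ℝ) : (φ v - φ y + t) ^ 2 ≤
      eres G u y * (energyFn (G.deleteEdges {s(u, v)}) φ + t ^ 2) := by
    have hstep := sq_sub_le_eres_mul_energyFn (h.adj.reachable.trans hr)
      (D.piecewise (fun _ ↦ φ v + t) φ)
    rw [Set.piecewise_eq_of_mem _ _ _ h.mem, Set.piecewise_eq_of_notMem _ _ _ hy,
      add_sub_right_comm] at hstep
    refine hstep.trans (mul_le_mul_of_nonneg_left ?_ (eres_nonneg G u y))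
    simpa using h.energyFn_piecewise_const_le_deleteEdges_add φ (φ v + t)
  have hone : 1 ≤ eres G u y := by simpa [energyFn] using hshift 0 1
  refine le_sub_iff_add_le.1 (eres_le (sub_nonneg.2 hone) fun φ ↦ ?_)
  calc (φ v - φ y) ^ 2 ≤ (eres G u y - 1) * energyFn (G.deleteEdges {s(u, v)}) φ :=
        sq_le_sub_one_mul_of_forall (zero_lt_one.trans_le hone) (hshift φ)
    _ ≤ (eres G u y - 1) * energyFn G φ := by
      rw [energyFn_eq_deleteEdges_add h.adj φ]
      exact mul_le_mul_of_nonneg_left (le_add_of_nonneg_right (sq_nonneg _)) (sub_nonneg.2 hone)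

lemma eres_eq_add_one (h : IsBridgeSide G D u v) (hy : y ∉ D) (hr : G.Reachable v y) :
    eres G u y = eres G v y + 1 :=
  (h.eres_le_add_one hy hr).antisymm (h.add_one_le_eres hy hr)

end IsBridgeSide

end Bridge

section DistanceToSet

variable [Fintype V] {G : SimpleGraph V} {S : Set V} {x y : V}

lemma distToSet_le_dist (hy : y ∈ S) : distToSet G x S ≤ G.dist x y :=
  Nat.sInf_le ⟨y, hy, rfl⟩

lemma exists_dist_eq_distToSet (G : SimpleGraph V) (hS : S.Nonempty) (x : V) :
    ∃ y ∈ S, G.dist x y = distToSet G x S :=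
  Nat.sInf_mem (s := {d | ∃ y ∈ S, G.dist x y = d}) (hS.elim fun y hy ↦ ⟨_, y, hy, rfl⟩)

lemma distToSet_eq_zero_of_mem (hx : x ∈ S) : distToSet G x S = 0 :=
  Nat.le_zero.1 (dist_self (G := G) (v := x) ▸ distToSet_le_dist hx)

lemma mem_of_distToSet_eq_zero (hG : G.Connected) (hS : S.Nonempty) (hx : distToSet G x S = 0) :
    x ∈ S := by
  obtain ⟨y, hy, hxy⟩ := exists_dist_eq_distToSet G hS x
  rwa [hG.dist_eq_zero_iff.1 (hxy.trans hx)]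

lemma distToSet_le_add_one (hG : G.Connected) (hS : S.Nonempty) (hxy : G.Adj x y) :
    distToSet G x S ≤ distToSet G y S + 1 := by
  obtain ⟨z, hz, hyz⟩ := exists_dist_eq_distToSet G hS y
  calc distToSet G x S ≤ G.dist x z := distToSet_le_dist hz
    _ ≤ G.dist x y + G.dist y z := hG.dist_triangle
    _ = distToSet G y S + 1 := by rw [dist_eq_one_iff_adj.2 hxy, hyz, add_comm]

lemma exists_adj_distToSet_eq_add_one (hG : G.Connected) (hS : S.Nonempty) (hx : x ∉ S) :
    ∃ y, G.Adj x y ∧ distToSet G x S = distToSet G y S + 1 := by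
  obtain ⟨z, hz, hxz⟩ := exists_dist_eq_distToSet G hS x
  obtain ⟨w, hw⟩ := hG.exists_walk_length_eq_dist x z
  cases w with
  | nil => exact absurd hz hx
  | @cons _ y _ hxy w =>
    refine ⟨y, hxy, (distToSet_le_add_one hG hS hxy).antisymm ?_⟩
    rw [← hxz, ← hw, Walk.length_cons]
    gcongr
    exact (distToSet_le_dist hz).trans (dist_le w)

end DistanceToSet

section Parent

variable [Fintype V] {G : SimpleGraph V} {S : Set V} {u w x : V}

/-- A chosen neighbour of `x` one step closer to `S`; vertices without one, in particular those
of `S`, are their own parent. -/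
noncomputable def parent (G : SimpleGraph V) (S : Set V) (x : V) : V :=
  if h : ∃ y, G.Adj x y ∧ distToSet G x S = distToSet G y S + 1 then h.choose else x

lemma parent_of_mem (hx : x ∈ S) : parent G S x = x :=
  dif_neg fun ⟨y, _, hy⟩ ↦ by simp [distToSet_eq_zero_of_mem hx] at hy

lemma adj_parent (hG : G.Connected) (hS : S.Nonempty) (hx : x ∉ S) : G.Adj x (parent G S x) := by
  have h := exists_adj_distToSet_eq_add_one hG hS hx
  rw [parent, dif_pos h]
  exact h.choose_spec.1

lemma distToSet_eq_parent_add_one (hG : G.Connected) (hS : S.Nonempty) (hx : x ∉ S) :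
    distToSet G x S = distToSet G (parent G S x) S + 1 := by
  have h := exists_adj_distToSet_eq_add_one hG hS hx
  rw [parent, dif_pos h]
  exact h.choose_spec.2

lemma distToSet_parent_le (G : SimpleGraph V) (S : Set V) (x : V) :
    distToSet G (parent G S x) S ≤ distToSet G x S := by
  rw [parent]
  split_ifs with h
  · exact Nat.le.intro h.choose_spec.2.symm
  · rfl

lemma injOn_mk_parent (hG : G.Connected) (hS : S.Nonempty) :
    Set.InjOn (fun u ↦ s(u, parent G S u)) Sᶜ := by
  intro u hu w hw huw
  rcases Sym2.eq_iff.1 huw with ⟨h, -⟩ | ⟨hu', hw'⟩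
  · exact h
  · have hdu := distToSet_eq_parent_add_one hG hS hu
    have hdw := distToSet_eq_parent_add_one hG hS hw
    rw [hw'] at hdu
    rw [← hu'] at hdw
    omega

/-- The vertices whose chain of parents towards `S` passes through `u`, including `u` itself. -/
def descendants (G : SimpleGraph V) (S : Set V) (u : V) : Set V :=
  {w | ∃ k, (parent G S)^[k] w = u}

lemma self_mem_descendants (G : SimpleGraph V) (S : Set V) (u : V) : u ∈ descendants G S u :=
  ⟨0, rfl⟩

lemma mem_descendants_iff : w ∈ descendants G S u ↔ w = u ∨ parent G S w ∈ descendants G S u := by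
  constructor
  · rintro ⟨_ | k, hk⟩
    · exact .inl hk
    · exact .inr ⟨k, hk⟩
  · rintro (rfl | ⟨k, hk⟩)
    · exact self_mem_descendants G S w
    · exact ⟨k + 1, hk⟩

lemma notMem_descendants_of_mem (hu : u ∉ S) (hx : x ∈ S) : x ∉ descendants G S u := by
  rintro ⟨k, hk⟩
  rw [Function.iterate_fixed (parent_of_mem hx)] at hk
  exact hu (hk ▸ hx)

lemma distToSet_le_of_mem_descendants (hw : w ∈ descendants G S u) :
    distToSet G u S ≤ distToSet G w S := by
  obtain ⟨k, rfl⟩ := hw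
  induction k generalizing w with
  | zero => rfl
  | succ k ih => exact ih.trans (distToSet_parent_le G S w)

lemma parent_notMem_descendants (hG : G.Connected) (hS : S.Nonempty) (hu : u ∉ S) :
    parent G S u ∉ descendants G S u := fun h ↦ by
  have hle := distToSet_le_of_mem_descendants h
  have heq := distToSet_eq_parent_add_one hG hS hu
  omega

lemma card_ancestors_eq_distToSet (hG : G.Connected) {C : Finset V} (hC : C.Nonempty) (w : V) :
    #{u ∈ Cᶜ | w ∈ descendants G C u} = distToSet G w C := by
  induction hd : distToSet G w C generalizing w with
  | zero =>
    have hw : w ∈ (C : Set V) := mem_of_distToSet_eq_zero hG hC hd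
    refine card_eq_zero.2 (filter_eq_empty_iff.2 fun u hu ↦ ?_)
    exact notMem_descendants_of_mem (mem_compl.1 hu) hw
  | succ d ih =>
    have hw : w ∉ (C : Set V) := fun hw ↦ by simp [distToSet_eq_zero_of_mem hw] at hd
    have hparent := distToSet_eq_parent_add_one hG hC hw
    have hinsert : {u ∈ Cᶜ | w ∈ descendants G C u} =
        insert w {u ∈ Cᶜ | parent G C w ∈ descendants G C u} := by
      ext u
      simp only [mem_filter, mem_insert, mem_descendants_iff (w := w), mem_compl]
      grind
    rw [hinsert, card_insert_of_notMem, ih _ (by omega)]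
    exact fun h ↦ parent_notMem_descendants hG hC hw (mem_filter.1 h).2

/-- The vertex of `S` reached from `x` by passing to parents. -/
noncomputable def root (G : SimpleGraph V) (S : Set V) (x : V) : V :=
  (parent G S)^[distToSet G x S] x

lemma root_of_mem (hx : x ∈ S) : root G S x = x :=
  Function.iterate_fixed (parent_of_mem hx) _

lemma root_parent (hG : G.Connected) (hS : S.Nonempty) (hx : x ∉ S) :
    root G S (parent G S x) = root G S x := by
  rw [root, root, distToSet_eq_parent_add_one hG hS hx, Function.iterate_succ_apply]

lemma root_mem (hG : G.Connected) (hS : S.Nonempty) (x : V) : root G S x ∈ S := by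
  induction hd : distToSet G x S generalizing x with
  | zero =>
    have hx := mem_of_distToSet_eq_zero hG hS hd
    rwa [root_of_mem hx]
  | succ d ih =>
    have hx : x ∉ S := fun hx ↦ by simp [distToSet_eq_zero_of_mem hx] at hd
    have hparent := distToSet_eq_parent_add_one hG hS hx
    exact root_parent hG hS hx ▸ ih _ (by omega)

lemma exists_walk_root (hG : G.Connected) (hS : S.Nonempty) {H : SimpleGraph V}
    (hH : ∀ u ∉ S, H.Adj u (parent G S u)) (x : V) :
    ∃ p : H.Walk x (root G S x), p.length = distToSet G x S := by
  induction hd : distToSet G x S generalizing x with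
  | zero =>
    have hx := mem_of_distToSet_eq_zero hG hS hd
    rw [root_of_mem hx]
    exact ⟨.nil, rfl⟩
  | succ d ih =>
    have hx : x ∉ S := fun hx ↦ by simp [distToSet_eq_zero_of_mem hx] at hd
    have hparent := distToSet_eq_parent_add_one hG hS hx
    have hwalk := ih (parent G S x) (by omega)
    rw [root_parent hG hS hx] at hwalk
    obtain ⟨p, hp⟩ := hwalk
    exact ⟨.cons (hH x hx) p, by rw [Walk.length_cons, hp]⟩

end Parent

section WeightedDegreeSum

variable [Fintype V]

lemma degR_eq_card_filter_edgeFinset (G : SimpleGraph V) (x : V) :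
    degR G x = #{e ∈ G.edgeFinset | x ∈ e} := by
  rw [← incidenceFinset_eq_filter, card_incidenceFinset_eq_degree,
    ← card_neighborFinset_eq_degree, neighborFinset_eq_filter, degR]

lemma sum_degR_mul_eq_sum_edgeFinset (G : SimpleGraph V) (f : V → ℝ) :
    ∑ x, degR G x * f x = ∑ e ∈ G.edgeFinset, ∑ x with x ∈ e, f x := by
  simp only [degR_eq_card_filter_edgeFinset, ← nsmul_eq_mul, ← sum_const]
  exact sum_comm' (by simp [and_comm])

lemma sum_mem_mk {a b : V} (hab : a ≠ b) (f : V → ℝ) : ∑ x with x ∈ s(a, b), f x = f a + f b := by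
  rw [← sum_pair hab]
  congr 1
  ext x
  simp

end WeightedDegreeSum

section TreeExtension

variable [Fintype V] {G : SimpleGraph V} {C : Finset V} {F : Finset (Sym2 V)}

/-- `G` arises from the graph with vertices `C` and edges `F` by attaching trees. Given that `G` is
connected, this is expressed by counting: outside `F` there is one edge for each vertex outside
`C`. -/
structure IsTreeExtension (G : SimpleGraph V) (C : Finset V) (F : Finset (Sym2 V)) : Prop where
  connected : G.Connected
  nonempty : C.Nonempty
  subset_edgeFinset : F ⊆ G.edgeFinset
  subset_sym2 : F ⊆ C.sym2
  card_edgeFinset : #G.edgeFinset = #F + #Cᶜ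

namespace IsTreeExtension

lemma disjoint_image_parent (h : IsTreeExtension G C F) :
    Disjoint F (Cᶜ.image fun u ↦ s(u, parent G C u)) := by
  rw [disjoint_right]
  rintro _ he hF
  obtain ⟨u, hu, rfl⟩ := mem_image.1 he
  exact mem_compl.1 hu (mk_mem_sym2_iff.1 (h.subset_sym2 hF)).1

lemma injOn_mk_parent (h : IsTreeExtension G C F) :
    Set.InjOn (fun u ↦ s(u, parent G C u)) (Cᶜ : Finset V) := by
  rw [coe_compl]
  exact _root_.injOn_mk_parent h.connected h.nonempty

lemma adj_parent (h : IsTreeExtension G C F) {u : V} (hu : u ∉ C) : G.Adj u (parent G C u) :=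
  _root_.adj_parent h.connected h.nonempty hu

lemma edgeFinset_eq (h : IsTreeExtension G C F) :
    G.edgeFinset = F ∪ Cᶜ.image fun u ↦ s(u, parent G C u) := by
  refine (eq_of_subset_of_card_le (union_subset h.subset_edgeFinset ?_) ?_).symm
  · refine image_subset_iff.2 fun u hu ↦ ?_
    exact mem_edgeFinset.2 (h.adj_parent (mem_compl.1 hu))
  · rw [card_union_of_disjoint h.disjoint_image_parent, card_image_of_injOn h.injOn_mk_parent,
      h.card_edgeFinset]

lemma adj_iff (h : IsTreeExtension G C F) {a b : V} :
    G.Adj a b ↔ s(a, b) ∈ F ∨ ∃ u ∉ C, s(u, parent G C u) = s(a, b) := by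
  rw [← mem_edgeSet, ← mem_edgeFinset, h.edgeFinset_eq]
  simp

lemma sum_degR_mul (h : IsTreeExtension G C F) (hF : ∀ x ∈ C, #{e ∈ F | x ∈ e} = 2) (f : V → ℝ) :
    ∑ x, degR G x * f x = 2 * ∑ x, f x + ∑ u ∈ Cᶜ, (f (parent G C u) - f u) := by
  have hcore : ∑ e ∈ F, ∑ x with x ∈ e, f x = ∑ x ∈ C, 2 * f x :=
    calc ∑ e ∈ F, ∑ x with x ∈ e, f x = ∑ x ∈ C, ∑ e ∈ F with x ∈ e, f x := by
          refine sum_comm' fun e x ↦ ?_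
          have hmem (he : e ∈ F) : x ∈ e → x ∈ C := mem_sym2_iff.1 (h.subset_sym2 he) x
          simp only [mem_filter, mem_univ, true_and]
          tauto
      _ = ∑ x ∈ C, 2 * f x := sum_congr rfl fun x hx ↦ by
          rw [sum_const, hF x hx, nsmul_eq_mul, Nat.cast_ofNat]
  have htrees : ∑ e ∈ Cᶜ.image (fun u ↦ s(u, parent G C u)), ∑ x with x ∈ e, f x =
      ∑ u ∈ Cᶜ, (f u + f (parent G C u)) := by
    rw [sum_image h.injOn_mk_parent]
    exact sum_congr rfl fun u hu ↦ sum_mem_mk (h.adj_parent (mem_compl.1 hu)).ne f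
  rw [sum_degR_mul_eq_sum_edgeFinset, h.edgeFinset_eq, sum_union h.disjoint_image_parent, hcore,
    htrees, ← sum_add_sum_compl C f, sum_add_distrib, sum_sub_distrib, ← mul_sum]
  ring

lemma isBridgeSide_descendants (h : IsTreeExtension G C F) {u : V} (hu : u ∉ C) :
    IsBridgeSide G (descendants G C u) u (parent G C u) where
  adj := h.adj_parent hu
  mem := self_mem_descendants G C u
  notMem := parent_notMem_descendants h.connected h.nonempty hu
  mem_iff a b hab := by
    obtain ⟨hab, hne⟩ := (deleteEdges_adj ..).1 hab
    rcases h.adj_iff.1 hab with hF | ⟨w, -, hwab⟩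
    · obtain ⟨ha, hb⟩ := mk_mem_sym2_iff.1 (h.subset_sym2 hF)
      exact iff_of_false (notMem_descendants_of_mem hu ha) (notMem_descendants_of_mem hu hb)
    · have hwu : w ≠ u := by
        rintro rfl
        exact hne hwab.symm
      have hiff : w ∈ descendants G C u ↔ parent G C w ∈ descendants G C u := by
        rw [mem_descendants_iff, or_iff_right hwu]
      rcases Sym2.eq_iff.1 hwab with ⟨rfl, rfl⟩ | ⟨rfl, rfl⟩
      · exact hiff
      · exact hiff.symm

lemma eres_parent_sub_eres (h : IsTreeExtension G C F) {u : V} (hu : u ∉ C) (y : V) :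
    eres G (parent G C u) y - eres G u y = 2 * (if y ∈ descendants G C u then 1 else 0) - 1 := by
  have hbridge := h.isBridgeSide_descendants hu
  split_ifs with hy
  · linarith [hbridge.compl.eres_eq_add_one (not_not_intro hy) (h.connected u y)]
  · linarith [hbridge.eres_eq_add_one hy (h.connected (parent G C u) y)]

lemma sum_eres_parent_sub_eres (h : IsTreeExtension G C F) (y : V) :
    ∑ u ∈ Cᶜ, (eres G (parent G C u) y - eres G u y) = 2 * (distToSet G y C : ℝ) - #Cᶜ := by
  rw [sum_congr rfl fun u hu ↦ h.eres_parent_sub_eres (mem_compl.1 hu) y, sum_sub_distrib,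
    ← mul_sum, sum_boole, card_ancestors_eq_distToSet h.connected h.nonempty]
  simp

lemma rw_eq_two_mul_rres (h : IsTreeExtension G C F) (hF : ∀ x ∈ C, #{e ∈ F | x ∈ e} = 2)
    (x : V) : Rw G x = 2 * Rres G x + 2 * (distToSet G x C : ℝ) - #Cᶜ := by
  have hcomm (y : V) : eres G x y = eres G y x := eres_comm (h.connected x y)
  simp only [Rw, Rres, hcomm]
  rw [h.sum_degR_mul hF fun y ↦ eres G y x, h.sum_eres_parent_sub_eres]
  ring

lemma sum_rres_parent_sub_rres (h : IsTreeExtension G C F) :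
    ∑ u ∈ Cᶜ, (Rres G (parent G C u) - Rres G u) =
      2 * ∑ y, (distToSet G y C : ℝ) - Fintype.card V * #Cᶜ := by
  simp only [Rres, ← sum_sub_distrib]
  rw [sum_comm]
  simp only [h.sum_eres_parent_sub_eres, sum_sub_distrib, ← mul_sum]
  simp

lemma sum_rw_parent_sub_rw (h : IsTreeExtension G C F) (hF : ∀ x ∈ C, #{e ∈ F | x ∈ e} = 2) :
    ∑ u ∈ Cᶜ, (Rw G (parent G C u) - Rw G u) =
      2 * ∑ u ∈ Cᶜ, (Rres G (parent G C u) - Rres G u) - 2 * #Cᶜ := by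
  have hterm (u : V) (hu : u ∈ Cᶜ) : Rw G (parent G C u) - Rw G u =
      2 * (Rres G (parent G C u) - Rres G u) - 2 := by
    rw [h.rw_eq_two_mul_rres hF, h.rw_eq_two_mul_rres hF,
      distToSet_eq_parent_add_one h.connected h.nonempty (mt mem_coe.1 (mem_compl.1 hu))]
    push_cast
    ring
  rw [sum_congr rfl hterm, sum_sub_distrib, ← mul_sum, sum_const, nsmul_eq_mul]
  ring

lemma kfStar_eq (h : IsTreeExtension G C F) (hF : ∀ x ∈ C, #{e ∈ F | x ∈ e} = 2) :
    KfStar G = 4 * Kf G + 4 * ∑ y, (distToSet G y C : ℝ) - (2 * Fintype.card V + 1) * #Cᶜ := by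
  have hKf : Kf G = 1 / 2 * ∑ x, Rres G x := rfl
  have hRw : ∑ x, Rw G x =
      2 * ∑ x, Rres G x + 2 * ∑ x, (distToSet G x C : ℝ) - Fintype.card V * #Cᶜ := by
    simp only [h.rw_eq_two_mul_rres hF, sum_sub_distrib, sum_add_distrib, ← mul_sum]
    simp
  calc KfStar G = 1 / 2 * ∑ x, degR G x * Rw G x := by simp only [KfStar, Rw, mul_sum, mul_assoc]
    _ = 4 * Kf G + 4 * ∑ y, (distToSet G y C : ℝ) - (2 * Fintype.card V + 1) * #Cᶜ := by
      rw [h.sum_degR_mul hF, h.sum_rw_parent_sub_rw hF, h.sum_rres_parent_sub_rres, hRw, hKf]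
      ring

lemma deleteEdges_adj_parent (h : IsTreeExtension G C F) {u : V} (hu : u ∉ C) :
    (G.deleteEdges F).Adj u (parent G C u) :=
  (deleteEdges_adj ..).2 ⟨h.adj_parent hu, fun hF ↦ hu (mk_mem_sym2_iff.1 (h.subset_sym2 hF)).1⟩

lemma root_eq_of_adj (h : IsTreeExtension G C F) {a b : V} (hab : (G.deleteEdges F).Adj a b) :
    root G C a = root G C b := by
  obtain ⟨hab, hF⟩ := (deleteEdges_adj ..).1 hab
  obtain ⟨u, hu, huab⟩ := (h.adj_iff.1 hab).resolve_left hF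
  have hroot : root G C (parent G C u) = root G C u := root_parent h.connected h.nonempty hu
  rcases Sym2.eq_iff.1 huab with ⟨rfl, rfl⟩ | ⟨rfl, rfl⟩
  · exact hroot.symm
  · exact hroot

lemma root_eq_of_reachable (h : IsTreeExtension G C F) {a b : V}
    (hab : (G.deleteEdges F).Reachable a b) : root G C a = root G C b := by
  obtain ⟨p⟩ := hab
  induction p with
  | nil => rfl
  | cons hadj _ ih => exact (h.root_eq_of_adj hadj).trans ih

lemma reachable_iff_root_eq (h : IsTreeExtension G C F) {v w : V} (hv : v ∈ C) :
    (G.deleteEdges F).Reachable v w ↔ root G C w = v := by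
  have hroot : root G C v = v := root_of_mem (mem_coe.2 hv)
  constructor
  · intro hvw
    rw [← h.root_eq_of_reachable hvw, hroot]
  · rintro rfl
    obtain ⟨p, -⟩ := exists_walk_root h.connected h.nonempty (fun _ ↦ h.deleteEdges_adj_parent) w
    exact p.reachable.symm

lemma dist_root (h : IsTreeExtension G C F) (w : V) :
    (G.deleteEdges F).dist (root G C w) w = distToSet G w C := by
  obtain ⟨p, hp⟩ := exists_walk_root h.connected h.nonempty (fun _ ↦ h.deleteEdges_adj_parent) w
  rw [dist_comm]
  refine (hp ▸ dist_le p).antisymm ?_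
  calc distToSet G w C ≤ G.dist w (root G C w) :=
        distToSet_le_dist (root_mem h.connected h.nonempty w)
    _ ≤ (G.deleteEdges F).dist w (root G C w) := p.reachable.dist_anti (deleteEdges_le _)

lemma branchD_eq (h : IsTreeExtension G C F) {v : V} (hv : v ∈ C) :
    branchD (G.deleteEdges F) v = ∑ w with root G C w = v, (distToSet G w C : ℝ) := by
  rw [branchD, sum_filter]
  refine sum_congr rfl fun w _ ↦ ite_congr (propext (h.reachable_iff_root_eq hv)) ?_ fun _ ↦ rfl
  rintro rfl
  rw [h.dist_root]

lemma sum_branchD (h : IsTreeExtension G C F) :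
    ∑ v ∈ C, branchD (G.deleteEdges F) v = ∑ w, (distToSet G w C : ℝ) := by
  rw [sum_congr rfl fun v hv ↦ h.branchD_eq hv]
  exact sum_fiberwise_of_maps_to (fun w _ ↦ mem_coe.1 (root_mem h.connected h.nonempty w)) _

end IsTreeExtension

end TreeExtension

section Cycle

lemma add_one_add_one_ne {l : ℕ} [NeZero l] (hl : 3 ≤ l) (i : Fin l) : i + 1 + 1 ≠ i := by
  intro h
  rw [add_assoc, add_eq_left, Fin.ext_iff, Fin.val_add, Fin.val_one', Fin.val_zero,
    Nat.mod_eq_of_lt (show 1 < l by omega), Nat.mod_eq_of_lt (show 1 + 1 < l by omega)] at h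
  exact absurd h (by norm_num)

variable {l : ℕ} [NeZero l] {c : Fin l → V}

lemma injective_mk_succ (hl : 3 ≤ l) (hc : Function.Injective c) :
    Function.Injective fun i : Fin l ↦ s(c i, c (i + 1)) := by
  intro i j hij
  rcases Sym2.eq_iff.1 hij with ⟨h, -⟩ | ⟨hi, hj⟩
  · exact hc h
  · obtain rfl := hc hi
    exact absurd (hc hj) (add_one_add_one_ne hl j)

/-- The edges of the cycle `c 0 - c 1 - ⋯ - c (l-1) - c 0`, as a finset. -/
noncomputable def cycleEdgeFinset (c : Fin l → V) : Finset (Sym2 V) :=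
  univ.image fun i ↦ s(c i, c (i + 1))

lemma coe_cycleEdgeFinset (c : Fin l → V) : (cycleEdgeFinset c : Set (Sym2 V)) = cycleEdges c := by
  rw [cycleEdgeFinset, coe_image, coe_univ, Set.image_univ, cycleEdges]

lemma card_cycleEdgeFinset (hl : 3 ≤ l) (hc : Function.Injective c) :
    #(cycleEdgeFinset c) = l := by
  rw [cycleEdgeFinset, card_image_of_injective _ (injective_mk_succ hl hc), card_univ,
    Fintype.card_fin]

lemma card_filter_mem_cycleEdgeFinset (hl : 3 ≤ l) (hc : Function.Injective c) (i : Fin l) :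
    #{e ∈ cycleEdgeFinset c | c i ∈ e} = 2 := by
  have hmem : ({j | c i ∈ s(c j, c (j + 1))} : Finset (Fin l)) = {i, i - 1} := by
    ext j
    simp [hc.eq_iff, eq_sub_iff_add_eq, eq_comm]
  rw [cycleEdgeFinset, filter_image, card_image_of_injective _ (injective_mk_succ hl hc), hmem,
    card_pair]
  intro h
  have hi : i + 1 = i := eq_sub_iff_add_eq.1 h
  exact add_one_add_one_ne hl i (by rw [hi, hi])

lemma isTreeExtension_cycle [Fintype V] {G : SimpleGraph V} (hG : G.Connected)
    (huni : esize G = Fintype.card V) (hl : 3 ≤ l) (hc : Function.Injective c)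
    (hadj : ∀ i, G.Adj (c i) (c (i + 1))) :
    IsTreeExtension G (univ.image c) (cycleEdgeFinset c) where
  connected := hG
  nonempty := univ_nonempty.image c
  subset_edgeFinset := image_subset_iff.2 fun i _ ↦ mem_edgeFinset.2 (hadj i)
  subset_sym2 := image_subset_iff.2 fun i _ ↦ by simp
  card_edgeFinset := by
    have hC : #(univ.image c) = #(cycleEdgeFinset c) := by
      rw [card_cycleEdgeFinset hl hc, card_image_of_injective _ hc, card_univ, Fintype.card_fin]
    rw [← hC, card_add_card_compl, ← huni, esize, Nat.card_eq_fintype_card, edgeFinset_card]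

end Cycle

/-- For an `n`-vertex unicyclic graph `G`,
`Kf*(G) = 4·Kf(G) + 4·Σ_{i=1}^{l} D_{T_i}(v_i) − (2n+1)(n−l)`. -/
theorem kfStar_formula [Fintype V] (G : SimpleGraph V) (n l : ℕ) [NeZero l]
    (hn : Fintype.card V = n) (hconn : G.Connected) (huni : esize G = n)
    (hl : 3 ≤ l) (c : Fin l → V) (hinj : Function.Injective c)
    (hadj : ∀ i : Fin l, G.Adj (c i) (c (i + 1))) :
    KfStar G = 4 * Kf G
      + 4 * (∑ i : Fin l, branchD (G.deleteEdges (cycleEdges c)) (c i))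
      - (2 * (n : ℝ) + 1) * ((n : ℝ) - l) := by
  subst hn
  have htree := isTreeExtension_cycle hconn huni hl hinj hadj
  have hregular : ∀ x ∈ univ.image c, #{e ∈ cycleEdgeFinset c | x ∈ e} = 2 := by
    simpa using card_filter_mem_cycleEdgeFinset hl hinj
  have hcard : (#(univ.image c)ᶜ : ℝ) = Fintype.card V - l := by
    rw [card_compl, Nat.cast_sub (card_le_univ _), card_image_of_injective _ hinj, card_univ,
      Fintype.card_fin]
  have hbranch : ∑ i, branchD (G.deleteEdges (cycleEdges c)) (c i) =
      ∑ w, (distToSet G w (univ.image c) : ℝ) := by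
    rw [← htree.sum_branchD, sum_image hinj.injOn, coe_cycleEdgeFinset]
  rw [htree.kfStar_eq hregular, hbranch, hcard]
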